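/- Let A = (Q,q₀,δ,F,Σ) be a trim NFA over an ordered alphabet (Σ,≺) with n states and let L = L(A). Then L is NOT Wheeler with respect to (Σ,≺) if and only if there exist words μ, ν, γ ∈ Σ* such that γ is not a suffix of μ and not a suffix of ν, and: (1) μγ^i ≢_L νγ^j for all 0 ≤ i,j ≤ 2^n; (2) there exist a state p ∈ δ(q₀,μ) with p ∈ δ(p,γ) and a state r ∈ δ(q₀,ν) with r ∈ δ(r,γ); (3) either both μ ≺ γ and ν ≺ γ, or both γ ≺ μ and γ ≺ ν. Moreover, when such words exist, they can be chosen with |μ| < |γ|, |ν| < |γ| and |γ| ≤ n³·(2^{3n} + 2·2^{2n} + 2^n + 2). -/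

import Mathlib

/-!
Common framework: words over an ordered alphabet, co-lexicographic order,
(partial) DFAs and NFAs, Wheeler automata and Wheeler languages,
following "Ordering regular languages: a danger zone".
-/

namespace WheelerPaper

/-- Strict co-lexicographic order on words: compare the reverses lexicographically. -/
def Colex {A : Type} [LinearOrder A] (x y : List A) : Prop :=
  List.Lex (· < ·) x.reverse y.reverse

/-- Non-strict co-lexicographic order. -/
def ColexLE {A : Type} [LinearOrder A] (x y : List A) : Prop :=
  Colex x y ∨ x = y

/-- Right context `α⁻¹L` of a word `α` with respect to a language `L`. -/
def rc {A : Type} (L : Set (List A)) (α : List A) : Set (List A) :=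
  {γ | α ++ γ ∈ L}

/-- `Pref L`: the set of prefixes of words of `L`. -/
def Pref {A : Type} (L : Set (List A)) : Set (List A) :=
  {α | ∃ β, α ++ β ∈ L}

/-- `wpow γ i` is `γ^i`, the `i`-fold concatenation of the word `γ`. -/
def wpow {A : Type} (γ : List A) : ℕ → List A
  | 0 => []
  | n + 1 => γ ++ wpow γ n

/-- A DFA with a possibly partial transition function. -/
structure PDFA (A : Type) (Q : Type) where
  init : Q
  trans : Q → A → Option Q
  accept : Q → Prop

/-- Extended (partial) transition function of a `PDFA`. -/
def PDFA.evalFrom {A Q : Type} (M : PDFA A Q) : Q → List A → Option Q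
  | q, [] => some q
  | q, a :: w => (M.trans q a).bind fun q' => PDFA.evalFrom M q' w

/-- The language accepted by a `PDFA`. -/
def PDFA.accepts {A Q : Type} (M : PDFA A Q) : Set (List A) :=
  {w | ∃ q, M.evalFrom M.init w = some q ∧ M.accept q}

/-- A `PDFA` is trim if every state is reachable from the initial state and
every state can reach some accepting state. -/
def PDFA.Trim {A Q : Type} (M : PDFA A Q) : Prop :=
  (∀ q : Q, ∃ α, M.evalFrom M.init α = some q) ∧
  (∀ q : Q, ∃ α q', M.evalFrom q α = some q' ∧ M.accept q')

/-- `r` is a Wheeler order for the DFA `M`: a strict total order on states whose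
minimum is the initial state, the initial state has no incoming transitions, and
the two Wheeler conditions hold. -/
def IsWheelerOrder {A Q : Type} [LinearOrder A] (M : PDFA A Q) (r : Q → Q → Prop) : Prop :=
  IsStrictTotalOrder Q r ∧
  (∀ q : Q, q ≠ M.init → r M.init q) ∧
  (∀ (q : Q) (a : A), M.trans q a ≠ some M.init) ∧
  (∀ (u₁ : Q) (a₁ : A) (v₁ : Q) (u₂ : Q) (a₂ : A) (v₂ : Q),
     M.trans u₁ a₁ = some v₁ → M.trans u₂ a₂ = some v₂ →
     (a₁ < a₂ → r v₁ v₂) ∧ (a₁ = a₂ → r u₁ u₂ → (r v₁ v₂ ∨ v₁ = v₂)))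

/-- A language is Wheeler (w.r.t. the given order on the alphabet) if it is
recognized by some Wheeler DFA. -/
def IsWheelerLang {A : Type} [LinearOrder A] (L : Set (List A)) : Prop :=
  ∃ (n : ℕ) (M : PDFA A (Fin n)) (r : Fin n → Fin n → Prop),
    IsWheelerOrder M r ∧ M.accepts = L

/-- A language is regular if it is recognized by some finite-state (partial) DFA. -/
def IsRegular {A : Type} (L : Set (List A)) : Prop :=
  ∃ (k : ℕ) (M : PDFA A (Fin k)), M.accepts = L

/-- The input-consistent convex refinement `≡^c_L` of the Myhill–Nerode
equivalence: same right context, same last character (or both empty), and every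
word of `Pref L` co-lexicographically between the two words has the same right
context. -/
def EquivC {A : Type} [LinearOrder A] (L : Set (List A)) (α β : List A) : Prop :=
  rc L α = rc L β ∧ α.getLast? = β.getLast? ∧
  ∀ γ ∈ Pref L,
    ((ColexLE α γ ∧ ColexLE γ β) ∨ (ColexLE β γ ∧ ColexLE γ α)) →
    rc L γ = rc L α

/-- An NFA with a single initial state. -/
structure NFA' (A : Type) (Q : Type) where
  init : Q
  trans : Q → A → Set Q
  accept : Q → Prop

/-- One step of an `NFA'` on a set of states. -/
def NFA'.stepSet {A Q : Type} (M : NFA' A Q) (S : Set Q) (a : A) : Set Q :=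
  {q | ∃ p ∈ S, q ∈ M.trans p a}

/-- Extended transition function of an `NFA'` on sets of states. -/
def NFA'.evalFrom {A Q : Type} (M : NFA' A Q) : Set Q → List A → Set Q
  | S, [] => S
  | S, a :: w => NFA'.evalFrom M (M.stepSet S a) w

/-- The language accepted by an `NFA'`. -/
def NFA'.accepts {A Q : Type} (M : NFA' A Q) : Set (List A) :=
  {w | ∃ q ∈ M.evalFrom {M.init} w, M.accept q}

/-- An `NFA'` is trim if every state is reachable from the initial state and
every state can reach some accepting state. -/
def NFA'.Trim {A Q : Type} (M : NFA' A Q) : Prop :=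
  (∀ q : Q, ∃ α, q ∈ M.evalFrom {M.init} α) ∧
  (∀ q : Q, ∃ α, ∃ q' ∈ M.evalFrom {q} α, M.accept q')

/-- `r` is a Wheeler order for the NFA `M`. -/
def IsWheelerNFAOrder {A Q : Type} [LinearOrder A] (M : NFA' A Q) (r : Q → Q → Prop) : Prop :=
  IsStrictTotalOrder Q r ∧
  (∀ q : Q, q ≠ M.init → r M.init q) ∧
  (∀ (q : Q) (a : A), M.init ∉ M.trans q a) ∧
  (∀ (u₁ : Q) (a₁ : A) (v₁ : Q) (u₂ : Q) (a₂ : A) (v₂ : Q),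
     v₁ ∈ M.trans u₁ a₁ → v₂ ∈ M.trans u₂ a₂ →
     (a₁ < a₂ → r v₁ v₂) ∧ (a₁ = a₂ → r u₁ u₂ → (r v₁ v₂ ∨ v₁ = v₂)))

/-- `I` is an interval with respect to the strict order `r`. -/
def IsIntervalRel {Q : Type} (r : Q → Q → Prop) (I : Set Q) : Prop :=
  ∀ x y z : Q, (r x y ∨ x = y) → (r y z ∨ y = z) → x ∈ I → z ∈ I → y ∈ I

/-- The class of star-free languages: built from `∅`, `{ε}` and the singletons
`{a}` by union, concatenation and complement. -/
inductive StarFree {A : Type} : Set (List A) → Prop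
  | empty : StarFree ∅
  | eps : StarFree {[]}
  | single (a : A) : StarFree {[a]}
  | union {L₁ L₂ : Set (List A)} : StarFree L₁ → StarFree L₂ → StarFree (L₁ ∪ L₂)
  | concat {L₁ L₂ : Set (List A)} : StarFree L₁ → StarFree L₂ →
      StarFree {w | ∃ u v, u ∈ L₁ ∧ v ∈ L₂ ∧ w = u ++ v}
  | compl {L : Set (List A)} : StarFree L → StarFree Lᶜ


/-- The language of all words over the sub-alphabet `S`. -/
def wordsOver {A : Type} (S : Set A) : Language A := {w | ∀ x ∈ w, x ∈ S}

/-!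
A word `x` reaches the set of states `δ(q₀, x)`; this map is right invariant, has at most `2 ^ n`
values, and determines the right context of `x`.

If three prefixes `x ≺ y ≺ z` ending in the same `k + 1` letters never have alternating right
contexts, then the pairs (last `k + 1` letters, right context) are the states of a Wheeler DFA. So
a non-Wheeler language has alternations `xζ ≺ yζ ≺ zζ` with `ζ` as long as we please. Shorten `x`,
`y`, `z`, and split `ζ = uvw` so that `v` loops on the sets of states reached by all of `xu`, `yu`,
`zu`. A power `γ` of `v` that is longer than these three words lies strictly on one side of `yu`,
hence of `yu` and one of its neighbours: these are `μ` and `ν`. A further power of `γ` turns the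
loops on sets of states into loops on states.

Conversely, condition (3) makes the sequence `μ, νγ, μγ², νγ³, …` monotone. The run of a Wheeler
DFA on a monotone sequence of words is monotone in its states, hence eventually constant, so two
consecutive words have the same right context, and pigeonhole lowers their exponents to at most
`2 ^ n`.
-/

section Colex

variable {A : Type} [LinearOrder A] {x y z : List A}

instance : IsStrictTotalOrder (List A) Colex :=
  (RelEmbedding.preimage ⟨List.reverse, List.reverse_injective⟩
    ((· < ·) : List A → List A → Prop)).isStrictTotalOrder

theorem Colex.trans (hxy : Colex x y) (hyz : Colex y z) : Colex x z :=
  trans_of Colex hxy hyz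

theorem Colex.ne (h : Colex x y) : x ≠ y :=
  ne_of_irrefl h

theorem not_colex_nil (x : List A) : ¬ Colex x [] :=
  List.not_lt_nil x.reverse

theorem nil_colex_iff_ne_nil : Colex [] x ↔ x ≠ [] := by
  refine ⟨fun h => h.ne.symm, fun h => ?_⟩
  rcases trichotomous_of Colex [] x with hlt | heq | hgt
  · exact hlt
  · exact absurd heq.symm h
  · exact absurd hgt (not_colex_nil x)

theorem colex_append_singleton {a b : A} :
    Colex (x ++ [a]) (y ++ [b]) ↔ a < b ∨ a = b ∧ Colex x y := by
  change (x ++ [a]).reverse < (y ++ [b]).reverse ↔ _ ∨ _ ∧ x.reverse < y.reverse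
  simp [List.cons_lt_cons_iff]

@[simp]
theorem colex_append_right (z : List A) : Colex (x ++ z) (y ++ z) ↔ Colex x y := by
  induction z using List.reverseRecOn with
  | nil => simp
  | append_singleton z a ih =>
    simp only [← List.append_assoc, colex_append_singleton, lt_irrefl, true_and, false_or, ih]

theorem Colex.append_left (h : Colex x y) (z : List A) : Colex x (z ++ y) := by
  rcases eq_or_ne z [] with rfl | hz
  · exact h
  · exact h.trans ((colex_append_right y).2 (nil_colex_iff_ne_nil.2 hz))

theorem Colex.append_left_of_not_isSuffix (h : Colex x y) (hs : ¬ x <:+ y) (z : List A) :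
    Colex (z ++ x) y := by
  induction x using List.reverseRecOn generalizing y with
  | nil => exact absurd List.nil_suffix hs
  | append_singleton x a ih =>
    rcases List.eq_nil_or_concat' y with rfl | ⟨y, b, rfl⟩
    · exact absurd h (not_colex_nil _)
    rw [← List.append_assoc, colex_append_singleton]
    refine (colex_append_singleton.1 h).imp_right ?_
    rintro ⟨rfl, hxy⟩
    exact ⟨rfl, ih hxy fun ⟨w, hw⟩ => hs ⟨w, by rw [← List.append_assoc, hw]⟩⟩

theorem colex_iff_getLast?_lt (h : x.getLast? ≠ y.getLast?) :
    Colex x y ↔ x.getLast? < y.getLast? := by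
  rcases List.eq_nil_or_concat' x with rfl | ⟨x, a, rfl⟩ <;>
    rcases List.eq_nil_or_concat' y with rfl | ⟨y, b, rfl⟩
  · exact absurd rfl h
  · simp [nil_colex_iff_ne_nil]
  · simp [not_colex_nil]
  · have hab : a ≠ b := by simpa using h
    simp [colex_append_singleton, hab]

theorem Colex.congr_getLast? {x' y' : List A} (h : Colex x y) (hne : x.getLast? ≠ y.getLast?)
    (hx : x'.getLast? = x.getLast?) (hy : y'.getLast? = y.getLast?) : Colex x' y' := by
  rw [colex_iff_getLast?_lt (by rwa [hx, hy]), hx, hy]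
  exact (colex_iff_getLast?_lt hne).1 h

theorem lt_of_take_lt_take {k : ℕ} (h : x.take k < y.take k) : x < y := by
  induction k generalizing x y with
  | zero => simp at h
  | succ k ih =>
    cases x <;> cases y <;> simp_all only [List.take_nil, List.take_succ_cons, List.not_lt_nil,
      List.nil_lt_cons, List.cons_lt_cons_iff]
    exact h.imp_right (And.imp_right ih)

theorem colex_of_colex_rtake {k : ℕ} (h : Colex (x.rtake k) (y.rtake k)) : Colex x y := by
  change (x.rtake k).reverse < (y.rtake k).reverse at h
  rw [List.rtake_eq_reverse_take_reverse, List.rtake_eq_reverse_take_reverse,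
    List.reverse_reverse, List.reverse_reverse] at h
  exact lt_of_take_lt_take h

/-- `γ` lies strictly on one side of both `μ` and `ν` in the co-lexicographic order. This is
condition (3) on the words that witness non-Wheelerness. -/
def SameSide (μ ν γ : List A) : Prop :=
  (Colex μ γ ∧ Colex ν γ) ∨ (Colex γ μ ∧ Colex γ ν)

theorem SameSide.append_left {μ ν γ : List A} (h : SameSide μ ν γ) (hμ : ¬ γ <:+ μ)
    (hν : ¬ γ <:+ ν) (z : List A) : SameSide μ ν (z ++ γ) :=
  h.imp (fun h => ⟨h.1.append_left z, h.2.append_left z⟩) fun h =>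
    ⟨h.1.append_left_of_not_isSuffix hμ z, h.2.append_left_of_not_isSuffix hν z⟩

end Colex

section Words

variable {A : Type}

theorem getLast?_eq_of_rtake_succ_eq {x y : List A} {k : ℕ}
    (h : x.rtake (k + 1) = y.rtake (k + 1)) : x.getLast? = y.getLast? := by
  have getLast?_rtake (z : List A) : (z.rtake (k + 1)).getLast? = z.getLast? := by
    simp [List.rtake_eq_reverse_take_reverse, List.head?_take]
  rw [← getLast?_rtake x, h, getLast?_rtake]

theorem exists_common_suffix_getLast?_ne {x y : List A} (z : List A) (h : x ≠ y) :
    ∃ x' y' z' ζ, x = x' ++ ζ ∧ y = y' ++ ζ ∧ z = z' ++ ζ ∧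
      ¬ (x'.getLast? = y'.getLast? ∧ y'.getLast? = z'.getLast?) := by
  induction x using List.reverseRecOn generalizing y z with
  | nil => exact ⟨[], y, z, [], by simp [eq_comm, h.symm]⟩
  | append_singleton x a ih =>
    by_cases hlast : (x ++ [a]).getLast? = y.getLast? ∧ y.getLast? = z.getLast?
    · have hy : y.getLast? = some a := by simpa using hlast.1.symm
      obtain ⟨y, rfl⟩ := List.getLast?_eq_some_iff.1 hy
      obtain ⟨z, rfl⟩ := List.getLast?_eq_some_iff.1 (hlast.2.symm.trans hy)
      obtain ⟨x', y', z', ζ, rfl, rfl, rfl, hne⟩ := ih z (fun hxy => h (by rw [hxy]))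
      exact ⟨x', y', z', ζ ++ [a], by simp, by simp, by simp, hne⟩
    · exact ⟨x ++ [a], y, z, [], by simp, by simp, by simp, hlast⟩

theorem wpow_add (γ : List A) (i j : ℕ) : wpow γ (i + j) = wpow γ i ++ wpow γ j := by
  induction i with
  | zero => simp [wpow]
  | succ i ih => simp [wpow, Nat.succ_add, ih]

theorem wpow_succ' (γ : List A) (i : ℕ) : wpow γ (i + 1) = wpow γ i ++ γ := by
  rw [wpow_add]
  simp [wpow]

theorem wpow_mul (γ : List A) (i j : ℕ) : wpow γ (i * j) = wpow (wpow γ i) j := by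
  induction j with
  | zero => rfl
  | succ j ih => rw [Nat.mul_succ, Nat.add_comm, wpow_add, ih, wpow]

theorem length_wpow (γ : List A) (i : ℕ) : (wpow γ i).length = i * γ.length := by
  induction i with
  | zero => simp [wpow]
  | succ i ih => rw [wpow, List.length_append, ih, Nat.succ_mul, Nat.add_comm]

theorem length_le_length_wpow (γ : List A) {i : ℕ} (hi : 0 < i) :
    γ.length ≤ (wpow γ i).length := by
  rw [length_wpow]
  exact Nat.le_mul_of_pos_left _ hi

theorem exists_length_wpow_mem_Ioc {γ : List A} (hγ : γ ≠ []) (m : ℕ) :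
    ∃ k, (wpow γ k).length ∈ Set.Ioc m (m + γ.length) := by
  have hpos : 0 < γ.length := List.length_pos_iff.2 hγ
  refine ⟨m / γ.length + 1, ?_⟩
  have hdiv := Nat.div_add_mod' m γ.length
  have hmod := Nat.mod_lt m hpos
  rw [length_wpow, Nat.succ_mul, Set.mem_Ioc]
  omega

end Words

section RightInvariant

variable {A S T : Type}

/-- `f` is constant on the classes of a right congruence: `f (x ++ z)` is determined by `f x` and
`z`. Such an `f` with values in a finite type is a complete deterministic automaton whose states
are the values of `f`. -/
def RightInvariant (f : List A → S) : Prop :=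
  ∀ ⦃x y : List A⦄, f x = f y → ∀ z, f (x ++ z) = f (y ++ z)

namespace RightInvariant

variable {f : List A → S} {g : List A → T}

theorem prodMk (hf : RightInvariant f) (hg : RightInvariant g) :
    RightInvariant fun x => (f x, g x) :=
  fun _ _ h z => Prod.ext (hf (congrArg Prod.fst h) z) (hg (congrArg Prod.snd h) z)

theorem comp_append_left (hf : RightInvariant f) (w : List A) :
    RightInvariant fun x => f (w ++ x) :=
  fun x y h z => by simpa only [List.append_assoc] using hf h z

theorem append_wpow_eq (hf : RightInvariant f) {x γ : List A} (h : f (x ++ γ) = f x) (k : ℕ) :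
    f (x ++ wpow γ k) = f x := by
  induction k with
  | zero => simp [wpow]
  | succ k ih => rw [wpow, ← List.append_assoc, hf h, ih]

end RightInvariant

theorem rightInvariant_rtake (k : ℕ) : RightInvariant fun x : List A => x.rtake k := by
  intro x y h z
  simp only [List.rtake_eq_reverse_take_reverse, List.reverse_inj] at h ⊢
  have hshort := congrArg (List.take (k - z.length)) h
  simp only [List.take_take, min_eq_left (Nat.sub_le k z.length)] at hshort
  simp [List.take_append, hshort]

end RightInvariant

section Pigeonhole

variable {A S : Type} [Finite S]

theorem exists_lt_map_eq_of_natCard_le (f : ℕ → S) :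
    ∃ i j, i < j ∧ j ≤ Nat.card S ∧ f i = f j := by
  have hninj : ¬ Function.Injective fun i : Fin (Nat.card S + 1) => f i := fun hinj => by
    simpa using Nat.card_le_card_of_injective _ hinj
  obtain ⟨i, j, hij, hne⟩ := Function.not_injective_iff.1 hninj
  rcases lt_or_gt_of_ne hne with hlt | hgt
  · exact ⟨i, j, hlt, by omega, hij⟩
  · exact ⟨j, i, hgt, by omega, hij.symm⟩

theorem exists_factor_of_natCard_le_length (f : List A → S) {x : List A}
    (hx : Nat.card S ≤ x.length) :
    ∃ u v w, x = u ++ v ++ w ∧ v ≠ [] ∧ (u ++ v).length ≤ Nat.card S ∧ f (u ++ v) = f u := by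
  obtain ⟨i, j, hij, hj, hf⟩ := exists_lt_map_eq_of_natCard_le fun i => f (x.take i)
  have htake : x.take j = x.take i ++ (x.take j).drop i := by
    conv_lhs => rw [← List.take_append_drop i (x.take j), List.take_take, min_eq_left hij.le]
  refine ⟨x.take i, (x.take j).drop i, x.drop j, ?_, ?_, ?_, ?_⟩
  · rw [← htake, List.take_append_drop]
  · rw [← List.length_pos_iff, List.length_drop, List.length_take]
    omega
  · rw [← htake, List.length_take]
    omega
  · rw [← htake, hf]

namespace RightInvariant

variable {f : List A → S}

theorem exists_length_lt (hf : RightInvariant f) (x : List A) :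
    ∃ x', f x' = f x ∧ x'.length < Nat.card S := by
  induction hl : x.length using Nat.strong_induction_on generalizing x with
  | _ l ih =>
    by_cases hx : x.length < Nat.card S
    · exact ⟨x, rfl, hx⟩
    obtain ⟨u, v, w, rfl, hv, -, huv⟩ := exists_factor_of_natCard_le_length f (not_lt.1 hx)
    have hpos : 0 < v.length := List.length_pos_iff.2 hv
    have hlt : (u ++ w).length < l := by
      simp only [List.length_append] at hl ⊢
      omega
    obtain ⟨x', hx', hlen⟩ := ih _ hlt _ rfl
    exact ⟨x', hx'.trans (hf huv w).symm, hlen⟩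

theorem exists_length_le_getLast?_eq (hf : RightInvariant f) (x : List A) :
    ∃ x', f x' = f x ∧ x'.getLast? = x.getLast? ∧ x'.length ≤ Nat.card S := by
  rcases List.eq_nil_or_concat' x with rfl | ⟨x, a, rfl⟩
  · exact ⟨[], rfl, rfl, Nat.zero_le _⟩
  · obtain ⟨x', hx', hlen⟩ := hf.exists_length_lt x
    exact ⟨x' ++ [a], hf hx' _, by simp, by simpa using hlen⟩

theorem exists_wpow_exponent_lt (hf : RightInvariant f) (x γ : List A) (i : ℕ) :
    ∃ j < Nat.card S, f (x ++ wpow γ j) = f (x ++ wpow γ i) := by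
  induction i using Nat.strong_induction_on with
  | _ i ih =>
    by_cases hi : i < Nat.card S
    · exact ⟨i, hi, rfl⟩
    obtain ⟨a, b, hab, hb, heq⟩ := exists_lt_map_eq_of_natCard_le fun k => f (x ++ wpow γ k)
    obtain ⟨j, hj, hji⟩ := ih (a + (i - b)) (by omega)
    refine ⟨j, hj, hji.trans ?_⟩
    have hshift := hf heq (wpow γ (i - b))
    rwa [List.append_assoc, List.append_assoc, ← wpow_add, ← wpow_add,
      Nat.add_sub_cancel' (by omega)] at hshift

variable [LinearOrder A]

theorem exists_short_colex (hf : RightInvariant f) {x y : List A} (h : Colex x y) :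
    ∃ x' y', f x' = f x ∧ f y' = f y ∧ Colex x' y' ∧
      x'.getLast? = x.getLast? ∧ y'.getLast? = y.getLast? ∧
      x'.length ≤ Nat.card S ^ 2 + Nat.card S ∧ y'.length ≤ Nat.card S ^ 2 + Nat.card S := by
  obtain ⟨x, y, y₂, ζ, rfl, rfl, hy₂, hlast⟩ := exists_common_suffix_getLast?_ne y h.ne
  obtain rfl := List.append_cancel_right hy₂
  have hxy : Colex x y := (colex_append_right ζ).1 h
  obtain ⟨x', hx, hxlast, hxlen⟩ := hf.exists_length_le_getLast?_eq x
  obtain ⟨y', hy, hylast, hylen⟩ := hf.exists_length_le_getLast?_eq y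
  obtain ⟨ζ', hζ, hζlast, hζlen⟩ :=
    ((hf.comp_append_left x').prodMk (hf.comp_append_left y')).exists_length_le_getLast?_eq ζ
  rw [Prod.mk.injEq] at hζ
  rw [Nat.card_prod, ← sq] at hζlen
  refine ⟨x' ++ ζ', y' ++ ζ', hζ.1.trans (hf hx ζ), hζ.2.trans (hf hy ζ),
    (colex_append_right ζ').2 (hxy.congr_getLast? (fun h => hlast ⟨h, rfl⟩) hxlast hylast),
    ?_, ?_, ?_, ?_⟩
  · simp only [List.getLast?_append, hζlast, hxlast]
  · simp only [List.getLast?_append, hζlast, hylast]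
  · rw [List.length_append]; omega
  · rw [List.length_append]; omega

theorem exists_short_colex_colex (hf : RightInvariant f) {x y z : List A} (hxy : Colex x y)
    (hyz : Colex y z) (hlast : ¬ (x.getLast? = y.getLast? ∧ y.getLast? = z.getLast?)) :
    ∃ x' y' z', f x' = f x ∧ f y' = f y ∧ f z' = f z ∧ Colex x' y' ∧ Colex y' z' ∧
      x'.length ≤ Nat.card S ^ 2 + Nat.card S ∧ y'.length ≤ Nat.card S ^ 2 + Nat.card S ∧
      z'.length ≤ Nat.card S ^ 2 + Nat.card S := by
  by_cases hyzlast : y.getLast? = z.getLast?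
  · obtain ⟨y', z', hy, hz, hyz', hylast, -, hylen, hzlen⟩ := hf.exists_short_colex hyz
    obtain ⟨x', hx, hxlast, hxlen⟩ := hf.exists_length_le_getLast?_eq x
    exact ⟨x', y', z', hx, hy, hz,
      hxy.congr_getLast? (fun h => hlast ⟨h, hyzlast⟩) hxlast hylast, hyz', by omega, hylen, hzlen⟩
  · obtain ⟨x', y', hx, hy, hxy', -, hylast, hxlen, hylen⟩ := hf.exists_short_colex hxy
    obtain ⟨z', hz, hzlast, hzlen⟩ := hf.exists_length_le_getLast?_eq z
    exact ⟨x', y', z', hx, hy, hz, hxy', hyz.congr_getLast? hyzlast hylast hzlast,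
      hxlen, hylen, by omega⟩

end RightInvariant

end Pigeonhole

section RightContexts

variable {A : Type} {L : Set (List A)} {x y z : List A}

theorem rightInvariant_rc (L : Set (List A)) : RightInvariant (rc L) := by
  intro x y h z
  ext w
  have hw : z ++ w ∈ rc L x ↔ z ++ w ∈ rc L y := by rw [h]
  simpa only [rc, Set.mem_ofPred_eq, List.append_assoc] using hw

theorem mem_pref_iff_of_rc_eq (h : rc L x = rc L y) : x ∈ Pref L ↔ y ∈ Pref L := by
  change (rc L x).Nonempty ↔ (rc L y).Nonempty
  rw [h]

theorem mem_iff_of_rc_eq (h : rc L x = rc L y) : x ∈ L ↔ y ∈ L := by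
  have hnil : [] ∈ rc L x ↔ [] ∈ rc L y := by rw [h]
  simpa only [rc, Set.mem_ofPred_eq, List.append_nil] using hnil

theorem subset_pref : L ⊆ Pref L :=
  fun x hx => ⟨[], by rwa [List.append_nil]⟩

theorem mem_pref_of_append_mem_pref (h : x ++ y ∈ Pref L) : x ∈ Pref L := by
  obtain ⟨w, hw⟩ := h
  exact ⟨y ++ w, by rwa [← List.append_assoc]⟩

variable [LinearOrder A]

/-- Three prefixes of `L`, increasing in co-lexicographic order, such that the right context
changes from each to the next. Alternations with arbitrarily long common suffixes are the
obstruction to being Wheeler. -/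
structure IsAlternation (L : Set (List A)) (x y z : List A) : Prop where
  left_mem_pref : x ∈ Pref L
  middle_mem_pref : y ∈ Pref L
  right_mem_pref : z ∈ Pref L
  colex_left : Colex x y
  colex_right : Colex y z
  rc_ne_left : rc L x ≠ rc L y
  rc_ne_right : rc L y ≠ rc L z

namespace IsAlternation

theorem of_append {w : List A} (h : IsAlternation L (x ++ w) (y ++ w) (z ++ w)) :
    IsAlternation L x y z where
  left_mem_pref := mem_pref_of_append_mem_pref h.left_mem_pref
  middle_mem_pref := mem_pref_of_append_mem_pref h.middle_mem_pref
  right_mem_pref := mem_pref_of_append_mem_pref h.right_mem_pref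
  colex_left := (colex_append_right w).1 h.colex_left
  colex_right := (colex_append_right w).1 h.colex_right
  rc_ne_left hxy := h.rc_ne_left (rightInvariant_rc L hxy w)
  rc_ne_right hyz := h.rc_ne_right (rightInvariant_rc L hyz w)

theorem congr_rc {x' y' z' : List A} (h : IsAlternation L x y z) (hx : rc L x' = rc L x)
    (hy : rc L y' = rc L y) (hz : rc L z' = rc L z) (hxy : Colex x' y') (hyz : Colex y' z') :
    IsAlternation L x' y' z' where
  left_mem_pref := (mem_pref_iff_of_rc_eq hx).2 h.left_mem_pref
  middle_mem_pref := (mem_pref_iff_of_rc_eq hy).2 h.middle_mem_pref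
  right_mem_pref := (mem_pref_iff_of_rc_eq hz).2 h.right_mem_pref
  colex_left := hxy
  colex_right := hyz
  rc_ne_left := by rw [hx, hy]; exact h.rc_ne_left
  rc_ne_right := by rw [hy, hz]; exact h.rc_ne_right

theorem exists_common_suffix {k : ℕ} (h : IsAlternation L x y z) (hxy : x.rtake k = y.rtake k)
    (hyz : y.rtake k = z.rtake k) :
    ∃ x' y' z' ζ, x = x' ++ ζ ∧ y = y' ++ ζ ∧ z = z' ++ ζ ∧ k ≤ ζ.length := by
  have hsplit (w : List A) : w = w.rdrop k ++ w.rtake k := (List.take_append_drop _ _).symm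
  refine ⟨x.rdrop k, y.rdrop k, z.rdrop k, y.rtake k, ?_, hsplit y, ?_, ?_⟩
  · rw [← hxy]; exact hsplit x
  · rw [hyz]; exact hsplit z
  have hdrop : Colex (x.rdrop k) (y.rdrop k) := by
    rw [← colex_append_right (y.rtake k), ← hsplit y, ← hxy, ← hsplit x]
    exact h.colex_left
  have hne : y.rdrop k ≠ [] := fun hnil => not_colex_nil _ (hnil ▸ hdrop)
  have hlen : y.length - k ≠ 0 := fun hzero => hne (by rw [List.rdrop, hzero, List.take_zero])
  rw [List.rtake, List.length_drop]
  omega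

end IsAlternation

theorem isAlternation_or_isAlternation_of_not_colex {x' y' : List A} (hx : x ∈ Pref L)
    (hy : y ∈ Pref L) (hx' : rc L x = rc L x') (hy' : rc L y = rc L y') (hne : rc L x ≠ rc L y)
    (hxy : Colex x y) (hxy' : ¬ Colex x' y') :
    IsAlternation L x y x' ∨ IsAlternation L y' x' y := by
  have hx'_pref : x' ∈ Pref L := (mem_pref_iff_of_rc_eq hx').1 hx
  have hy'_pref : y' ∈ Pref L := (mem_pref_iff_of_rc_eq hy').1 hy
  have hy'x' : Colex y' x' := by
    rcases trichotomous_of Colex x' y' with hlt | rfl | hgt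
    · exact absurd hlt hxy'
    · exact absurd (hx'.trans hy'.symm) hne
    · exact hgt
  rcases trichotomous_of Colex y x' with hyx' | rfl | hx'y
  · exact Or.inl ⟨hx, hy, hx'_pref, hxy, hyx', hne, hx' ▸ hne.symm⟩
  · exact absurd hx' hne
  · exact Or.inr ⟨hy'_pref, hx'_pref, hy, hy'x', hx'y, hx' ▸ hy' ▸ hne.symm, hx' ▸ hne⟩

end RightContexts

section DeterministicAutomata

variable {A Q Q' : Type}

namespace PDFA

theorem evalFrom_append (M : PDFA A Q) (q : Q) (x y : List A) :
    M.evalFrom q (x ++ y) = (M.evalFrom q x).bind fun q' => M.evalFrom q' y := by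
  induction x generalizing q with
  | nil => rfl
  | cons a x ih => simp only [List.cons_append, evalFrom, Option.bind_assoc, ih]

theorem evalFrom_append_singleton (M : PDFA A Q) (q : Q) (x : List A) (a : A) :
    M.evalFrom q (x ++ [a]) = (M.evalFrom q x).bind fun q' => M.trans q' a := by
  simp [evalFrom_append, evalFrom]

theorem exists_evalFrom_eq_some (M : PDFA A Q) {x : List A} (hx : x ∈ Pref M.accepts) :
    ∃ q, M.evalFrom M.init x = some q := by
  obtain ⟨y, q, hq, -⟩ := hx
  rw [evalFrom_append, Option.bind_eq_some_iff] at hq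
  exact hq.imp fun _ h => h.1

theorem rc_eq_of_evalFrom_eq (M : PDFA A Q) {x y : List A}
    (h : M.evalFrom M.init x = M.evalFrom M.init y) : rc M.accepts x = rc M.accepts y := by
  ext w
  simp only [rc, accepts, Set.mem_ofPred_eq, evalFrom_append, h]

/-- The automaton `M` with its states renamed along `e`. It turns an automaton on an arbitrary
finite type into one on `Fin n`, the form required by `IsWheelerLang`. -/
def reindex (M : PDFA A Q) (e : Q ≃ Q') : PDFA A Q' where
  init := e M.init
  trans q a := (M.trans (e.symm q) a).map e
  accept q := M.accept (e.symm q)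

theorem evalFrom_reindex (M : PDFA A Q) (e : Q ≃ Q') (q : Q) (x : List A) :
    (M.reindex e).evalFrom (e q) x = (M.evalFrom q x).map e := by
  induction x generalizing q with
  | nil => rfl
  | cons a x ih =>
    simp only [evalFrom, reindex, Equiv.symm_apply_apply] at ih ⊢
    cases M.trans q a <;> simp [ih]

theorem accepts_reindex (M : PDFA A Q) (e : Q ≃ Q') : (M.reindex e).accepts = M.accepts := by
  ext x
  change (∃ q, (M.reindex e).evalFrom (e M.init) x = some q ∧ M.accept (e.symm q)) ↔ _
  simp only [evalFrom_reindex, Option.map_eq_some_iff]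
  constructor
  · rintro ⟨_, ⟨q, hq, rfl⟩, hacc⟩
    exact ⟨q, hq, by rwa [e.symm_apply_apply] at hacc⟩
  · rintro ⟨q, hq, hacc⟩
    exact ⟨e q, ⟨q, hq, rfl⟩, by rwa [e.symm_apply_apply]⟩

end PDFA

variable [LinearOrder A]

theorem IsWheelerOrder.reindex {M : PDFA A Q} {r : Q → Q → Prop} (h : IsWheelerOrder M r)
    (e : Q ≃ Q') : IsWheelerOrder (M.reindex e) (e.symm ⁻¹'o r) := by
  obtain ⟨hr, hmin, hinit, hstep⟩ := h
  have trans_reindex {q a q'} (hq : (M.reindex e).trans q a = some q') :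
      M.trans (e.symm q) a = some (e.symm q') := by
    obtain ⟨p, hp, rfl⟩ := Option.map_eq_some_iff.1 hq
    rwa [e.symm_apply_apply]
  refine ⟨(RelEmbedding.preimage e.symm.toEmbedding r).isStrictTotalOrder, fun q hq => ?_,
    fun q a hq => ?_, fun u₁ a₁ v₁ u₂ a₂ v₂ h₁ h₂ => ?_⟩
  · change r (e.symm (e M.init)) (e.symm q)
    rw [e.symm_apply_apply]
    exact hmin _ fun h => hq (e.symm_apply_eq.1 h)
  · exact hinit (e.symm q) a ((trans_reindex hq).trans (congrArg some (e.symm_apply_apply _)))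
  · have hv := hstep _ _ _ _ _ _ (trans_reindex h₁) (trans_reindex h₂)
    exact ⟨hv.1, fun ha hu => (hv.2 ha hu).imp_right fun h => e.symm.injective h⟩

theorem IsWheelerOrder.isWheelerLang_accepts [Finite Q] {M : PDFA A Q} {r : Q → Q → Prop}
    (h : IsWheelerOrder M r) : IsWheelerLang M.accepts := by
  obtain ⟨n, ⟨e⟩⟩ := Finite.exists_equiv_fin Q
  exact ⟨n, M.reindex e, _, h.reindex e, M.accepts_reindex e⟩

theorem IsWheelerOrder.rel_or_eq_of_colex {M : PDFA A Q} {r : Q → Q → Prop}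
    (hr : IsWheelerOrder M r) {x y : List A} {u v : Q} (hu : M.evalFrom M.init x = some u)
    (hv : M.evalFrom M.init y = some v) (h : Colex x y) : r u v ∨ u = v := by
  obtain ⟨-, hmin, -, hstep⟩ := hr
  induction x using List.reverseRecOn generalizing y u v with
  | nil =>
    obtain rfl : M.init = u := Option.some_injective _ hu
    exact or_iff_not_imp_right.2 fun hne => hmin v (Ne.symm hne)
  | append_singleton x a ih =>
    rcases List.eq_nil_or_concat' y with rfl | ⟨y, b, rfl⟩
    · exact absurd h (not_colex_nil _)
    rw [PDFA.evalFrom_append_singleton, Option.bind_eq_some_iff] at hu hv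
    obtain ⟨u', hu', hu⟩ := hu
    obtain ⟨v', hv', hv⟩ := hv
    obtain ⟨hlt, heq⟩ := hstep _ _ _ _ _ _ hu hv
    rcases colex_append_singleton.1 h with hab | ⟨rfl, hxy⟩
    · exact Or.inl (hlt hab)
    rcases ih hu' hv' hxy with huv | rfl
    · exact heq rfl huv
    · exact Or.inr (Option.some_injective _ (hu.symm.trans hv))

theorem isWheelerLang_empty : IsWheelerLang (∅ : Set (List A)) := by
  let M : PDFA A Unit := ⟨(), fun _ _ => none, fun _ => False⟩
  have haccepts : M.accepts = ∅ := by
    ext x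
    exact iff_of_false (fun ⟨_, _, hacc⟩ => hacc) (Set.notMem_empty x)
  have hM : IsWheelerOrder M (· < ·) := by
    refine ⟨inferInstance, fun _ h => absurd rfl h, ?_, ?_⟩ <;> simp [M]
  exact haccepts ▸ hM.isWheelerLang_accepts

end DeterministicAutomata

section WheelerKeys

variable {A S : Type} {L : Set (List A)} {key : List A → S}

/-- A prefix of `L` with the given key. -/
noncomputable def keyRep (q : key '' Pref L) : List A :=
  q.2.choose

theorem key_keyRep (q : key '' Pref L) : key (keyRep q) = q :=
  q.2.choose_spec.2

variable (L key) in
open Classical in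
/-- The key of `x` as a state of the automaton of keys, undefined if `x` is not a prefix of `L`. -/
noncomputable def keyState (x : List A) : Option (key '' Pref L) :=
  if hx : x ∈ Pref L then some ⟨key x, x, hx, rfl⟩ else none

theorem keyState_eq_some_iff {x : List A} {q : key '' Pref L} :
    keyState L key x = some q ↔ x ∈ Pref L ∧ key x = q := by
  unfold keyState
  split_ifs with hx <;> simp [hx, Subtype.ext_iff]

/-- The automaton whose states are the keys of the prefixes of `L`. It simulates `L` provided that
`key` is right invariant and determines right contexts. -/
noncomputable def keyAutomaton (hnil : [] ∈ Pref L) : PDFA A (key '' Pref L) where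
  init := ⟨key [], [], hnil, rfl⟩
  trans q a := keyState L key (keyRep q ++ [a])
  accept q := keyRep q ∈ L

variable [LinearOrder A]

/-- `key` is a right-invariant invariant of words from which the right context and the last letter
can be read off, and whose classes on `Pref L` are separated by the co-lexicographic order: two
distinct keys compare in the same way whichever prefixes represent them. -/
structure IsWheelerKey (L : Set (List A)) (key : List A → S) : Prop where
  rightInvariant : RightInvariant key
  rc_eq : Function.FactorsThrough (rc L) key
  getLast?_eq : Function.FactorsThrough List.getLast? key
  colex_congr : ∀ ⦃x y x' y' : List A⦄, x ∈ Pref L → y ∈ Pref L →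
    key x = key x' → key y = key y' → key x ≠ key y → Colex x y → Colex x' y'

namespace IsWheelerKey

theorem keyState_append_singleton (h : IsWheelerKey L key) (x : List A) (a : A) :
    keyState L key (x ++ [a]) =
      (keyState L key x).bind fun q => keyState L key (keyRep q ++ [a]) := by
  by_cases hx : x ∈ Pref L
  · let q : key '' Pref L := ⟨key x, x, hx, rfl⟩
    have hq : keyState L key x = some q := keyState_eq_some_iff.2 ⟨hx, rfl⟩
    have hkey : key (x ++ [a]) = key (keyRep q ++ [a]) := h.rightInvariant (key_keyRep q).symm [a]
    rw [hq, Option.bind_some]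
    ext p
    rw [keyState_eq_some_iff, keyState_eq_some_iff, mem_pref_iff_of_rc_eq (h.rc_eq hkey), hkey]
  · have hxa : x ++ [a] ∉ Pref L := fun hxa => hx (mem_pref_of_append_mem_pref hxa)
    simp [keyState, hx, hxa]

theorem evalFrom_keyAutomaton (h : IsWheelerKey L key) (hnil : [] ∈ Pref L) (x : List A) :
    (keyAutomaton (key := key) hnil).evalFrom (keyAutomaton hnil).init x = keyState L key x := by
  induction x using List.reverseRecOn with
  | nil => exact (keyState_eq_some_iff.2 ⟨hnil, rfl⟩).symm
  | append_singleton x a ih =>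
    rw [PDFA.evalFrom_append_singleton, ih, h.keyState_append_singleton]
    rfl

theorem accepts_keyAutomaton (h : IsWheelerKey L key) (hnil : [] ∈ Pref L) :
    (keyAutomaton (key := key) hnil).accepts = L := by
  ext x
  have mem_iff {q : key '' Pref L} (hq : key x = q) : keyRep q ∈ L ↔ x ∈ L :=
    mem_iff_of_rc_eq (h.rc_eq ((key_keyRep q).trans hq.symm))
  simp only [PDFA.accepts, h.evalFrom_keyAutomaton hnil, keyState_eq_some_iff, Set.mem_ofPred_eq]
  constructor
  · rintro ⟨q, ⟨-, hq⟩, hacc⟩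
    exact (mem_iff hq).1 hacc
  · intro hx
    exact ⟨⟨key x, x, subset_pref hx, rfl⟩, ⟨subset_pref hx, rfl⟩, (mem_iff rfl).2 hx⟩

theorem isWheelerOrder_keyAutomaton (h : IsWheelerKey L key) (hnil : [] ∈ Pref L) :
    IsWheelerOrder (keyAutomaton (key := key) hnil) (keyRep ⁻¹'o Colex) := by
  have keyRep_injective : Function.Injective (keyRep : key '' Pref L → List A) := fun p q hpq =>
    Subtype.ext (by rw [← key_keyRep p, ← key_keyRep q, hpq])
  have getLast?_keyRep {x : List A} {q : key '' Pref L} (hx : key x = q) :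
      (keyRep q).getLast? = x.getLast? := h.getLast?_eq ((key_keyRep q).trans hx.symm)
  have keyRep_init : keyRep (keyAutomaton (key := key) hnil).init = [] :=
    List.getLast?_eq_none_iff.1 (getLast?_keyRep (x := []) rfl)
  refine ⟨(RelEmbedding.preimage ⟨keyRep, keyRep_injective⟩ Colex).isStrictTotalOrder,
    fun q hq => ?_, fun q a hq => ?_, fun u₁ a₁ v₁ u₂ a₂ v₂ h₁ h₂ => ?_⟩
  · change Colex (keyRep (keyAutomaton hnil).init) (keyRep q)
    rw [keyRep_init, nil_colex_iff_ne_nil, ← keyRep_init]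
    exact keyRep_injective.ne hq
  · have hlast := getLast?_keyRep (keyState_eq_some_iff.1 hq).2
    simp [keyRep_init] at hlast
  obtain ⟨hpref₁, hv₁⟩ := keyState_eq_some_iff.1 h₁
  obtain ⟨hpref₂, hv₂⟩ := keyState_eq_some_iff.1 h₂
  refine ⟨fun hlt => ?_, ?_⟩
  · have hcolex : Colex (keyRep u₁ ++ [a₁]) (keyRep u₂ ++ [a₂]) :=
      colex_append_singleton.2 (Or.inl hlt)
    exact hcolex.congr_getLast? (by simpa using hlt.ne) (getLast?_keyRep hv₁) (getLast?_keyRep hv₂)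
  · rintro rfl hu
    refine or_iff_not_imp_right.2 fun hne => ?_
    refine h.colex_congr hpref₁ hpref₂
      (hv₁.trans (key_keyRep v₁).symm) (hv₂.trans (key_keyRep v₂).symm) ?_
      ((colex_append_right [a₁]).2 hu)
    rw [hv₁, hv₂]
    exact fun heq => hne (Subtype.ext heq)

theorem isWheelerLang (h : IsWheelerKey L key) (hfin : (key '' Pref L).Finite) :
    IsWheelerLang L := by
  rcases L.eq_empty_or_nonempty with rfl | ⟨x, hx⟩
  · exact isWheelerLang_empty
  have := hfin.to_subtype
  exact h.accepts_keyAutomaton ⟨x, hx⟩ ▸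
    (h.isWheelerOrder_keyAutomaton ⟨x, hx⟩).isWheelerLang_accepts

end IsWheelerKey

theorem isWheelerKey_rtake_rc {k : ℕ} (hk : ∀ x y z ζ : List A,
    IsAlternation L (x ++ ζ) (y ++ ζ) (z ++ ζ) → ζ.length ≤ k) :
    IsWheelerKey L fun x => (x.rtake (k + 1), rc L x) where
  rightInvariant := (rightInvariant_rtake (k + 1)).prodMk (rightInvariant_rc L)
  rc_eq _ _ h := congrArg Prod.snd h
  getLast?_eq _ _ h := getLast?_eq_of_rtake_succ_eq (congrArg Prod.fst h)
  colex_congr := by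
    intro x y x' y' hx hy hxx' hyy' hne hcolex
    simp only [Prod.mk.injEq] at hxx' hyy'
    have not_isAlternation {u v w : List A} (huv : u.rtake (k + 1) = v.rtake (k + 1))
        (hvw : v.rtake (k + 1) = w.rtake (k + 1)) : ¬ IsAlternation L u v w := by
      intro h
      obtain ⟨u, v, w, ζ, rfl, rfl, rfl, hζ⟩ := h.exists_common_suffix huv hvw
      exact absurd (hk u v w ζ h) (by omega)
    rcases trichotomous_of Colex (x.rtake (k + 1)) (y.rtake (k + 1)) with hlt | heq | hgt
    · exact colex_of_colex_rtake (hyy'.1 ▸ hxx'.1 ▸ hlt)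
    · by_contra hncolex
      rcases isAlternation_or_isAlternation_of_not_colex hx hy hxx'.2 hyy'.2
        (fun hrc => hne (Prod.ext heq hrc)) hcolex hncolex with halt | halt
      · exact not_isAlternation heq (heq.symm.trans hxx'.1) halt
      · exact not_isAlternation (by rw [← hyy'.1, ← hxx'.1, heq]) (hxx'.1.symm.trans heq) halt
    · exact absurd hcolex (asymm_of Colex (colex_of_colex_rtake hgt))

theorem exists_isAlternation_of_not_isWheelerLang [Finite A] (hrc : (Set.range (rc L)).Finite)
    (hL : ¬ IsWheelerLang L) (k : ℕ) :
    ∃ x y z ζ, IsAlternation L (x ++ ζ) (y ++ ζ) (z ++ ζ) ∧ k < ζ.length := by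
  contrapose! hL with hk
  refine (isWheelerKey_rtake_rc hk).isWheelerLang
    (((List.finite_length_le A (k + 1)).prod hrc).subset ?_)
  rintro _ ⟨x, -, rfl⟩
  refine ⟨?_, x, rfl⟩
  change (x.drop (x.length - (k + 1))).length ≤ k + 1
  rw [List.length_drop]
  omega

end WheelerKeys

section Pumping

variable {A S : Type} [LinearOrder A] [Finite S] {L : Set (List A)} {f : List A → S}
  {x y z ζ : List A}

namespace IsAlternation

theorem exists_length_le (h : IsAlternation L (x ++ ζ) (y ++ ζ) (z ++ ζ)) (hf : RightInvariant f)
    (hL : Function.FactorsThrough (rc L) f) :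
    ∃ x' y' z' ζ', IsAlternation L (x' ++ ζ') (y' ++ ζ') (z' ++ ζ') ∧ ζ.length ≤ ζ'.length ∧
      x'.length ≤ Nat.card S ^ 2 + Nat.card S ∧ y'.length ≤ Nat.card S ^ 2 + Nat.card S ∧
      z'.length ≤ Nat.card S ^ 2 + Nat.card S := by
  have hxy : x ≠ y := fun hxy => h.colex_left.ne (congrArg (· ++ ζ) hxy)
  obtain ⟨x, y, z, η, rfl, rfl, rfl, hlast⟩ := exists_common_suffix_getLast?_ne z hxy
  simp only [List.append_assoc] at h
  obtain ⟨x', y', z', hx, hy, hz, hxy', hyz', hlen⟩ := hf.exists_short_colex_colex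
    ((colex_append_right _).1 h.colex_left) ((colex_append_right _).1 h.colex_right) hlast
  refine ⟨x', y', z', η ++ ζ, ?_, by simp, hlen⟩
  exact h.congr_rc (hL (hf hx _)) (hL (hf hy _)) (hL (hf hz _))
    ((colex_append_right _).2 hxy') ((colex_append_right _).2 hyz')

theorem exists_loop (h : IsAlternation L (x ++ ζ) (y ++ ζ) (z ++ ζ)) (hf : RightInvariant f)
    (hL : Function.FactorsThrough (rc L) f) (hζ : Nat.card S ^ 3 ≤ ζ.length) :
    ∃ μ ν γ, μ ∈ Pref L ∧ ν ∈ Pref L ∧ rc L μ ≠ rc L ν ∧ f (μ ++ γ) = f μ ∧ f (ν ++ γ) = f ν ∧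
      SameSide μ ν γ ∧ μ.length < γ.length ∧ ν.length < γ.length ∧
      γ.length ≤ Nat.card S ^ 3 + Nat.card S ^ 2 + Nat.card S := by
  obtain ⟨x, y, z, ζ', h, hlen, hx, hy, hz⟩ := h.exists_length_le hf hL
  have hcard : Nat.card (S × S × S) = Nat.card S ^ 3 := by rw [Nat.card_prod, Nat.card_prod]; ring
  obtain ⟨u, v, w, rfl, hv, huv, hloop⟩ := exists_factor_of_natCard_le_length
    (fun u => (f (x ++ u), f (y ++ u), f (z ++ u))) (hcard.le.trans (hζ.trans hlen))
  simp only [Prod.mk.injEq, ← List.append_assoc] at hloop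
  obtain ⟨hxv, hyv, hzv⟩ := hloop
  rw [hcard, List.length_append] at huv
  simp only [List.append_assoc u v w, ← List.append_assoc _ u (v ++ w)] at h
  replace h : IsAlternation L (x ++ u) (y ++ u) (z ++ u) := h.of_append
  obtain ⟨k, hgt, hle⟩ := exists_length_wpow_mem_Ioc hv (Nat.card S ^ 2 + Nat.card S + u.length)
  have hlt {p : List A} (hp : p.length ≤ Nat.card S ^ 2 + Nat.card S) :
      (p ++ u).length < (wpow v k).length := by
    rw [List.length_append]; omega
  rcases trichotomous_of Colex (y ++ u) (wpow v k) with hyγ | heq | hγy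
  · exact ⟨x ++ u, y ++ u, wpow v k, h.left_mem_pref, h.middle_mem_pref, h.rc_ne_left,
      hf.append_wpow_eq hxv k, hf.append_wpow_eq hyv k, Or.inl ⟨h.colex_left.trans hyγ, hyγ⟩,
      hlt hx, hlt hy, by omega⟩
  · exact absurd (congrArg List.length heq) (hlt hy).ne
  · exact ⟨y ++ u, z ++ u, wpow v k, h.middle_mem_pref, h.right_mem_pref, h.rc_ne_right,
      hf.append_wpow_eq hyv k, hf.append_wpow_eq hzv k, Or.inr ⟨hγy, hγy.trans h.colex_right⟩,
      hlt hy, hlt hz, by omega⟩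

end IsAlternation

end Pumping

section WheelerLanguages

variable {A : Type} [LinearOrder A] {L : Set (List A)}

theorem IsWheelerLang.exists_rc_eq_rc_succ (hL : IsWheelerLang L) {w : ℕ → List A}
    (hw : ∀ i, w i ∈ Pref L)
    (hmono : (∀ i, Colex (w i) (w (i + 1))) ∨ ∀ i, Colex (w (i + 1)) (w i)) :
    ∃ i, rc L (w i) = rc L (w (i + 1)) := by
  obtain ⟨n, M, r, hM, rfl⟩ := hL
  have := hM.1
  choose q hq using fun i => M.exists_evalFrom_eq_some (hw i)
  by_contra! hne
  have hq_ne (i : ℕ) : q i ≠ q (i + 1) := fun h =>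
    hne i (M.rc_eq_of_evalFrom_eq (by rw [hq, hq, h]))
  have not_chain (s : Fin n → Fin n → Prop) [IsStrictTotalOrder (Fin n) s] :
      ¬ ∀ i, s (q i) (q (i + 1)) := fun hs => by
    obtain ⟨i, j, hij, heq⟩ := Finite.exists_ne_map_eq_of_infinite q
    rcases lt_or_gt_of_ne hij with hlt | hgt
    · exact ne_of_irrefl (Nat.rel_of_forall_rel_succ_of_lt s hs hlt) heq
    · exact ne_of_irrefl (Nat.rel_of_forall_rel_succ_of_lt s hs hgt) heq.symm
  rcases hmono with hinc | hdec
  · exact not_chain r fun i =>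
      (hM.rel_or_eq_of_colex (hq i) (hq (i + 1)) (hinc i)).resolve_right (hq_ne i)
  · exact not_chain (Function.swap r) fun i =>
      (hM.rel_or_eq_of_colex (hq (i + 1)) (hq i) (hdec i)).resolve_right (hq_ne i).symm

theorem IsWheelerLang.exists_rc_append_wpow_eq (hL : IsWheelerLang L) {μ ν γ : List A}
    (hμ : ∀ i, μ ++ wpow γ i ∈ Pref L) (hν : ∀ i, ν ++ wpow γ i ∈ Pref L) (hμγ : ¬ γ <:+ μ)
    (hνγ : ¬ γ <:+ ν) (hside : SameSide μ ν γ) :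
    ∃ i j, rc L (μ ++ wpow γ i) = rc L (ν ++ wpow γ j) := by
  let b (i : ℕ) : List A := if Even i then μ else ν
  have b_induction {P : List A → Prop} (hPμ : P μ) (hPν : P ν) (i : ℕ) : P (b i) := by
    dsimp only [b]; split_ifs <;> assumption
  have split_succ (i : ℕ) : b (i + 1) ++ wpow γ (i + 1) = b (i + 1) ++ γ ++ wpow γ i := by
    rw [wpow, List.append_assoc]
  have hmono : (∀ i, Colex (b i ++ wpow γ i) (b (i + 1) ++ wpow γ (i + 1))) ∨
      ∀ i, Colex (b (i + 1) ++ wpow γ (i + 1)) (b i ++ wpow γ i) := by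
    simp only [split_succ, colex_append_right]
    refine hside.imp (fun h i => ?_) fun h i => ?_
    · exact (b_induction (P := (Colex · γ)) h.1 h.2 i).append_left _
    · exact (b_induction (P := Colex γ) h.1 h.2 i).append_left_of_not_isSuffix
        (b_induction (P := (¬ γ <:+ ·)) hμγ hνγ i) _
  obtain ⟨i, hi⟩ := hL.exists_rc_eq_rc_succ (fun i => b_induction
    (P := (· ++ wpow γ i ∈ Pref L)) (hμ i) (hν i) i) hmono
  by_cases heven : Even i
  · exact ⟨i, i + 1, by simpa [b, heven, Nat.even_add_one] using hi⟩
  · exact ⟨i + 1, i, by simpa [b, heven, Nat.even_add_one] using hi.symm⟩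

end WheelerLanguages

section NondeterministicAutomata

variable {A Q : Type}

theorem natCard_set [Finite Q] : Nat.card (Set Q) = 2 ^ Nat.card Q := by
  have := Fintype.ofFinite Q
  rw [Nat.card_eq_fintype_card, Nat.card_eq_fintype_card, Fintype.card_set]

namespace NFA'

theorem evalFrom_append (M : NFA' A Q) (S : Set Q) (x y : List A) :
    M.evalFrom S (x ++ y) = M.evalFrom (M.evalFrom S x) y := by
  induction x generalizing S with
  | nil => rfl
  | cons a _ ih => exact ih (M.stepSet S a)

theorem mem_evalFrom_iff (M : NFA' A Q) {S : Set Q} {x : List A} {q : Q} :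
    q ∈ M.evalFrom S x ↔ ∃ p ∈ S, q ∈ M.evalFrom {p} x := by
  induction x generalizing S with
  | nil => simp [evalFrom]
  | cons a x ih =>
    simp only [evalFrom]
    rw [ih]
    simp_rw [ih (S := M.stepSet {_} a)]
    simp only [stepSet, Set.mem_ofPred_eq, Set.mem_singleton_iff, exists_eq_left]
    exact ⟨fun ⟨p', ⟨p, hp, hp'⟩, hq⟩ => ⟨p, hp, p', hp', hq⟩,
      fun ⟨p, hp, p', hp', hq⟩ => ⟨p', ⟨p, hp, hp'⟩, hq⟩⟩

theorem mem_evalFrom_append (M : NFA' A Q) {S : Set Q} {x y : List A} {p q : Q}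
    (hp : p ∈ M.evalFrom S x) (hq : q ∈ M.evalFrom {p} y) : q ∈ M.evalFrom S (x ++ y) := by
  rw [evalFrom_append, mem_evalFrom_iff]
  exact ⟨p, hp, hq⟩

theorem mem_evalFrom_wpow (M : NFA' A Q) {p : Q} {γ : List A} (h : p ∈ M.evalFrom {p} γ) (k : ℕ) :
    p ∈ M.evalFrom {p} (wpow γ k) := by
  induction k with
  | zero => rfl
  | succ k ih => exact M.mem_evalFrom_append h ih

theorem rightInvariant_evalFrom (M : NFA' A Q) (S : Set Q) : RightInvariant (M.evalFrom S) :=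
  fun _ _ h z => by simp only [evalFrom_append, h]

theorem factorsThrough_rc_accepts (M : NFA' A Q) :
    Function.FactorsThrough (rc M.accepts) (M.evalFrom {M.init}) := by
  intro x y h
  ext z
  simp only [rc, accepts, Set.mem_ofPred_eq, evalFrom_append, h]

theorem finite_range_rc_accepts [Finite Q] (M : NFA' A Q) :
    (Set.range (rc M.accepts)).Finite := by
  obtain ⟨g, hg⟩ := (Function.factorsThrough_iff _).1 M.factorsThrough_rc_accepts
  rw [hg]
  exact (Set.finite_range g).subset (Set.range_comp_subset_range _ g)

theorem mem_pref_accepts_of_mem_evalFrom (M : NFA' A Q) {x : List A} {q : Q}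
    (hco : ∃ y, ∃ q' ∈ M.evalFrom {q} y, M.accept q') (hq : q ∈ M.evalFrom {M.init} x) :
    x ∈ Pref M.accepts := by
  obtain ⟨y, q', hq', hacc⟩ := hco
  exact ⟨y, q', M.mem_evalFrom_append hq hq', hacc⟩

theorem evalFrom_nonempty_of_mem_pref (M : NFA' A Q) {x : List A} (hx : x ∈ Pref M.accepts) :
    (M.evalFrom {M.init} x).Nonempty := by
  obtain ⟨y, q, hq, -⟩ := hx
  rw [evalFrom_append, mem_evalFrom_iff] at hq
  exact hq.imp fun _ h => h.1

-- Walking backwards along `γ` inside `S` must eventually revisit a state.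
theorem exists_mem_evalFrom_wpow_self [Finite Q] (M : NFA' A Q) {S : Set Q} {γ : List A}
    (hS : S.Nonempty) (h : S ⊆ M.evalFrom S γ) :
    ∃ p ∈ S, ∃ b, 0 < b ∧ b ≤ Nat.card Q ∧ p ∈ M.evalFrom {p} (wpow γ b) := by
  have exists_pred (q : S) : ∃ p : S, (q : Q) ∈ M.evalFrom {(p : Q)} γ := by
    obtain ⟨p, hp, hq⟩ := M.mem_evalFrom_iff.1 (h q.2)
    exact ⟨⟨p, hp⟩, hq⟩
  choose pred hpred using exists_pred
  have mem_iterate (k : ℕ) (q : S) : (q : Q) ∈ M.evalFrom {(pred^[k] q : Q)} (wpow γ k) := by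
    induction k with
    | zero => rfl
    | succ k ih =>
      rw [Function.iterate_succ_apply']
      exact M.mem_evalFrom_append (hpred _) ih
  obtain ⟨q, hq⟩ := hS
  obtain ⟨i, j, hij, hj, heq⟩ :=
    exists_lt_map_eq_of_natCard_le fun k => (pred^[k] ⟨q, hq⟩ : Q)
  refine ⟨pred^[i] ⟨q, hq⟩, Subtype.coe_prop _, j - i, by omega, by omega, ?_⟩
  have hcycle : pred^[j - i] (pred^[i] ⟨q, hq⟩) = pred^[i] ⟨q, hq⟩ := by
    rw [← Function.iterate_add_apply, Nat.sub_add_cancel hij.le, Subtype.ext heq]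
  simpa only [hcycle] using mem_iterate (j - i) (pred^[i] ⟨q, hq⟩)

variable [LinearOrder A]

/-- The words `μ`, `ν`, `γ` satisfy conditions (1)-(3) of the characterization of non-Wheelerness
for the automaton `M`, where (1) is required for exponents up to `m`. -/
def IsNonWheelerWitness (M : NFA' A Q) (m : ℕ) (μ ν γ : List A) : Prop :=
  ¬ γ <:+ μ ∧ ¬ γ <:+ ν ∧
  (∀ i j : ℕ, i ≤ m → j ≤ m → rc M.accepts (μ ++ wpow γ i) ≠ rc M.accepts (ν ++ wpow γ j)) ∧
  (∃ p ∈ M.evalFrom {M.init} μ, p ∈ M.evalFrom {p} γ) ∧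
  (∃ r ∈ M.evalFrom {M.init} ν, r ∈ M.evalFrom {r} γ) ∧
  SameSide μ ν γ

variable [Finite Q] {M : NFA' A Q}

theorem IsNonWheelerWitness.not_isWheelerLang {μ ν γ : List A}
    (h : M.IsNonWheelerWitness (2 ^ Nat.card Q) μ ν γ)
    (hco : ∀ q, ∃ α, ∃ q' ∈ M.evalFrom {q} α, M.accept q') : ¬ IsWheelerLang M.accepts := by
  intro hL
  obtain ⟨hμγ, hνγ, hne, ⟨p, hp, hpγ⟩, ⟨r, hr, hrγ⟩, hside⟩ := h
  have pump_mem_pref {x : List A} {q : Q} (hq : q ∈ M.evalFrom {M.init} x)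
      (hqγ : q ∈ M.evalFrom {q} γ) (i : ℕ) : x ++ wpow γ i ∈ Pref M.accepts :=
    M.mem_pref_accepts_of_mem_evalFrom (hco q)
      (M.mem_evalFrom_append hq (M.mem_evalFrom_wpow hqγ i))
  have exists_small_exponent (x : List A) (i : ℕ) : ∃ j ≤ 2 ^ Nat.card Q,
      rc M.accepts (x ++ wpow γ j) = rc M.accepts (x ++ wpow γ i) := by
    obtain ⟨j, hj, hji⟩ := (M.rightInvariant_evalFrom {M.init}).exists_wpow_exponent_lt x γ i
    rw [natCard_set] at hj
    exact ⟨j, hj.le, M.factorsThrough_rc_accepts hji⟩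
  obtain ⟨i, j, hij⟩ := hL.exists_rc_append_wpow_eq (pump_mem_pref hp hpγ) (pump_mem_pref hr hrγ)
    hμγ hνγ hside
  obtain ⟨i', hi', hii'⟩ := exists_small_exponent μ i
  obtain ⟨j', hj', hjj'⟩ := exists_small_exponent ν j
  exact hne i' j' hi' hj' (hii'.trans (hij.trans hjj'.symm))

theorem exists_isNonWheelerWitness_wpow {μ ν γ : List A} (hμ : μ ∈ Pref M.accepts)
    (hν : ν ∈ Pref M.accepts) (hne : rc M.accepts μ ≠ rc M.accepts ν)
    (hμγ : M.evalFrom {M.init} (μ ++ γ) = M.evalFrom {M.init} μ)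
    (hνγ : M.evalFrom {M.init} (ν ++ γ) = M.evalFrom {M.init} ν) (hside : SameSide μ ν γ)
    (hμlt : μ.length < γ.length) (hνlt : ν.length < γ.length) (m : ℕ) :
    ∃ d, 0 < d ∧ d ≤ Nat.card Q ^ 2 ∧ M.IsNonWheelerWitness m μ ν (wpow γ d) := by
  obtain ⟨p, hp, b, hb, hbQ, hpb⟩ := M.exists_mem_evalFrom_wpow_self
    (M.evalFrom_nonempty_of_mem_pref hμ) (M.evalFrom_append _ μ γ ▸ hμγ).superset
  obtain ⟨r, hr, c, hc, hcQ, hrc⟩ := M.exists_mem_evalFrom_wpow_self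
    (M.evalFrom_nonempty_of_mem_pref hν) (M.evalFrom_append _ ν γ ▸ hνγ).superset
  have hbc : 0 < b * c := Nat.mul_pos hb hc
  have not_isSuffix {x y : List A} (h : y.length < x.length) : ¬ x <:+ y :=
    fun hsuff => absurd hsuff.length_le h.not_ge
  have hle := length_le_length_wpow γ hbc
  have rc_pump {x : List A} (hx : M.evalFrom {M.init} (x ++ γ) = M.evalFrom {M.init} x) (i : ℕ) :
      rc M.accepts (x ++ wpow (wpow γ (b * c)) i) = rc M.accepts x := by
    have hf := M.rightInvariant_evalFrom {M.init}
    exact M.factorsThrough_rc_accepts (hf.append_wpow_eq (hf.append_wpow_eq hx _) i)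
  refine ⟨b * c, hbc, sq (Nat.card Q) ▸ Nat.mul_le_mul hbQ hcQ, not_isSuffix (hμlt.trans_le hle),
    not_isSuffix (hνlt.trans_le hle), fun i j _ _ => ?_, ⟨p, hp, ?_⟩, ⟨r, hr, ?_⟩, ?_⟩
  · rw [rc_pump hμγ, rc_pump hνγ]
    exact hne
  · rw [wpow_mul]
    exact M.mem_evalFrom_wpow hpb c
  · rw [mul_comm, wpow_mul]
    exact M.mem_evalFrom_wpow hrc b
  · obtain ⟨k, hk⟩ := Nat.exists_eq_succ_of_ne_zero hbc.ne'
    rw [hk, wpow_succ']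
    exact hside.append_left (not_isSuffix hμlt) (not_isSuffix hνlt) _

theorem exists_isNonWheelerWitness [Finite A] (hL : ¬ IsWheelerLang M.accepts) (m : ℕ) :
    ∃ μ ν γ, M.IsNonWheelerWitness m μ ν γ ∧ μ.length < γ.length ∧ ν.length < γ.length ∧
      γ.length ≤ Nat.card Q ^ 2 *
        (2 ^ (3 * Nat.card Q) + 2 ^ (2 * Nat.card Q) + 2 ^ Nat.card Q) := by
  obtain ⟨x, y, z, ζ, halt, hζ⟩ := exists_isAlternation_of_not_isWheelerLang
    M.finite_range_rc_accepts hL (Nat.card (Set Q) ^ 3)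
  obtain ⟨μ, ν, γ, hμ, hν, hne, hμγ, hνγ, hside, hμlt, hνlt, hγ⟩ :=
    halt.exists_loop (M.rightInvariant_evalFrom _) M.factorsThrough_rc_accepts hζ.le
  rw [natCard_set, ← pow_mul, ← pow_mul, mul_comm _ 3, mul_comm _ 2] at hγ
  obtain ⟨d, hd, hdQ, hwitness⟩ :=
    exists_isNonWheelerWitness_wpow hμ hν hne hμγ hνγ hside hμlt hνlt m
  have hle := length_le_length_wpow γ hd
  refine ⟨μ, ν, wpow γ d, hwitness, hμlt.trans_le hle, hνlt.trans_le hle, ?_⟩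
  rw [length_wpow]
  exact Nat.mul_le_mul hdQ hγ

end NFA'

theorem statement1_general [Finite A] [LinearOrder A] [Finite Q] (M : NFA' A Q)
    (hco : ∀ q, ∃ α, ∃ q' ∈ M.evalFrom {q} α, M.accept q') :
    (¬ IsWheelerLang M.accepts ↔ ∃ μ ν γ, M.IsNonWheelerWitness (2 ^ Nat.card Q) μ ν γ) ∧
    (¬ IsWheelerLang M.accepts →
      ∃ μ ν γ, M.IsNonWheelerWitness (2 ^ Nat.card Q) μ ν γ ∧
        μ.length < γ.length ∧ ν.length < γ.length ∧
        γ.length ≤ Nat.card Q ^ 3 *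
          (2 ^ (3 * Nat.card Q) + 2 * 2 ^ (2 * Nat.card Q) + 2 ^ Nat.card Q + 2)) := by
  have hcard : 0 < Nat.card Q := Nat.card_pos_iff.2 ⟨⟨M.init⟩, inferInstance⟩
  have exists_witness (hL : ¬ IsWheelerLang M.accepts) :=
    NFA'.exists_isNonWheelerWitness hL (2 ^ Nat.card Q)
  refine ⟨⟨fun hL => ?_, fun ⟨μ, ν, γ, h⟩ => h.not_isWheelerLang hco⟩, fun hL => ?_⟩ <;>
    obtain ⟨μ, ν, γ, h, hμ, hν, hγ⟩ := exists_witness hL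
  · exact ⟨μ, ν, γ, h⟩
  · exact ⟨μ, ν, γ, h, hμ, hν, hγ.trans
      (Nat.mul_le_mul (Nat.pow_le_pow_right hcard (by norm_num)) (by omega))⟩

end NondeterministicAutomata

section Statement1

/-- Corollary 1 of the paper: characterization of
non-Wheelerness of the language of a trim NFA, with bounds on the witnesses. -/
theorem statement1 {A : Type} [Fintype A] [LinearOrder A] {n : ℕ}
    (M : NFA' A (Fin n)) (htrim : M.Trim)
    (L : Set (List A)) (hL : L = M.accepts) :
    (¬ IsWheelerLang L ↔
      ∃ (μ ν γ : List A),
        ¬ γ <:+ μ ∧ ¬ γ <:+ ν ∧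
        (∀ i j : ℕ, i ≤ 2 ^ n → j ≤ 2 ^ n →
          rc L (μ ++ wpow γ i) ≠ rc L (ν ++ wpow γ j)) ∧
        (∃ p ∈ M.evalFrom {M.init} μ, p ∈ M.evalFrom {p} γ) ∧
        (∃ r ∈ M.evalFrom {M.init} ν, r ∈ M.evalFrom {r} γ) ∧
        ((Colex μ γ ∧ Colex ν γ) ∨ (Colex γ μ ∧ Colex γ ν))) ∧
    (¬ IsWheelerLang L →
      ∃ (μ ν γ : List A),
        ¬ γ <:+ μ ∧ ¬ γ <:+ ν ∧
        (∀ i j : ℕ, i ≤ 2 ^ n → j ≤ 2 ^ n →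
          rc L (μ ++ wpow γ i) ≠ rc L (ν ++ wpow γ j)) ∧
        (∃ p ∈ M.evalFrom {M.init} μ, p ∈ M.evalFrom {p} γ) ∧
        (∃ r ∈ M.evalFrom {M.init} ν, r ∈ M.evalFrom {r} γ) ∧
        ((Colex μ γ ∧ Colex ν γ) ∨ (Colex γ μ ∧ Colex γ ν)) ∧
        μ.length < γ.length ∧ ν.length < γ.length ∧
        γ.length ≤ n ^ 3 * (2 ^ (3 * n) + 2 * 2 ^ (2 * n) + 2 ^ n + 2)) := by
  subst hL
  simpa only [NFA'.IsNonWheelerWitness, SameSide, and_assoc, Nat.card_fin]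
    using statement1_general M htrim.2

end Statement1

end WheelerPaper
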